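/- If the movement graph G_M of a consecutive transition instance with n moving labels is acyclic, then executing the movements consecutively in any topological order of G_M (an order in which, for every edge from vᵢ to vⱼ, movement Mᵢ is executed before Mⱼ) produces at most n overlaps during the transition. -/

import Mathlib

open Set

/-- The closed axis-aligned unit square with lower-left corner `a`. -/
def unitSq (a : ℝ × ℝ) : Set (ℝ × ℝ) :=
  Set.Icc a.1 (a.1 + 1) ×ˢ Set.Icc a.2 (a.2 + 1)

/-- Two unit squares, given by their lower-left corners, overlap if their interiors intersect. -/
def Overlap (a b : ℝ × ℝ) : Prop :=
  (interior (unitSq a) ∩ interior (unitSq b)).Nonempty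

/-- `a` is the lower-left corner of one of the four candidate positions of point `p`
(the four closed unit squares having `p` as a corner). -/
def IsCandidate (p a : ℝ × ℝ) : Prop :=
  a = p ∨ a = (p.1 - 1, p.2) ∨ a = (p.1, p.2 - 1) ∨ a = (p.1 - 1, p.2 - 1)

/-- Two unit squares (given by lower-left corners) share an edge. -/
def SharesEdge (a b : ℝ × ℝ) : Prop :=
  (a.1 = b.1 ∧ (a.2 - b.2 = 1 ∨ b.2 - a.2 = 1)) ∨
  (a.2 = b.2 ∧ (a.1 - b.1 = 1 ∨ b.1 - a.1 = 1))

/-- A movement of the unit-square label of point `p` from candidate position `S` to candidate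
position `E`.  If `S` and `E` share an edge (a non-diagonal movement) we set `I = E` and the
label translates directly from `S` to `E`; if `S` and `E` are diagonally opposite (a diagonal
movement) the label translates through the specified intermediate candidate position `I`,
which shares an edge with both `S` and `E`. -/
structure Movement where
  p : ℝ × ℝ
  S : ℝ × ℝ
  I : ℝ × ℝ
  E : ℝ × ℝ
  candS : IsCandidate p S
  candI : IsCandidate p I
  candE : IsCandidate p E
  legs : (I = E ∧ SharesEdge S E) ∨
    (SharesEdge S I ∧ SharesEdge I E ∧ S.1 ≠ E.1 ∧ S.2 ≠ E.2)

/-- A movement is diagonal if the start and end positions are diagonally opposite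
(equivalently, the intermediate position differs from the end position). -/
def Movement.Diagonal (m : Movement) : Prop := m.I ≠ m.E

/-- Position (lower-left corner) of a moving label at time `t` after the start of its movement:
unit-speed axis-aligned translation, one unit of time per axis-aligned leg; the label rests at
its start position before the movement begins and at its end position after it is finished. -/
noncomputable def Movement.pos (m : Movement) (t : ℝ) : ℝ × ℝ :=
  if t ≤ 0 then m.S
  else if t ≤ 1 then m.S + t • (m.I - m.S)
  else if t ≤ 2 then m.I + (t - 1) • (m.E - m.I)
  else m.E

/-- Duration of a movement: one unit of time per axis-aligned translation. -/
noncomputable def Movement.dur (m : Movement) : ℝ := if m.I = m.E then 1 else 2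

/-- A transition instance: finitely many stationary labels (given by their lower-left corners)
and `n` moving labels, each with a prescribed movement, such that the labeling `L₁` formed by
the stationary labels together with the start positions of the moving labels is overlap-free,
and the labeling `L₂` formed by the stationary labels together with the end positions of the
moving labels is overlap-free. -/
structure TransitionInstance (k n : ℕ) where
  stat : Fin k → ℝ × ℝ
  mov : Fin n → Movement
  free_start : ∀ a b : Fin k ⊕ Fin n, a ≠ b →
    ¬ Overlap (Sum.elim stat (fun j => (mov j).S) a)
      (Sum.elim stat (fun j => (mov j).S) b)
  free_end : ∀ a b : Fin k ⊕ Fin n, a ≠ b →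
    ¬ Overlap (Sum.elim stat (fun j => (mov j).E) a)
      (Sum.elim stat (fun j => (mov j).E) b)

/-- A schedule `τ` of starting times is consecutive if the execution intervals of the movements
are pairwise non-overlapping, i.e. the movements are executed one after another in some order. -/
def Consecutive {k n : ℕ} (T : TransitionInstance k n) (τ : Fin n → ℝ) : Prop :=
  ∀ i j : Fin n, i ≠ j →
    τ i + (T.mov i).dur ≤ τ j ∨ τ j + (T.mov j).dur ≤ τ i

/-- Position (lower-left corner) of each label at global time `t`, when moving label `j`
starts its movement at time `τ j`; stationary labels never move. -/
noncomputable def traj {k n : ℕ} (T : TransitionInstance k n) (τ : Fin n → ℝ) (t : ℝ) :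
    Fin k ⊕ Fin n → ℝ × ℝ :=
  Sum.elim T.stat (fun j => (T.mov j).pos (t - τ j))

/-- The number of overlaps during the transition: the number of unordered pairs of distinct
labels whose interiors intersect at some moment. -/
noncomputable def overlapCount {k n : ℕ} (T : TransitionInstance k n) (τ : Fin n → ℝ) : ℕ :=
  Set.ncard {q : Sym2 (Fin k ⊕ Fin n) | ∃ a b : Fin k ⊕ Fin n,
    q = s(a, b) ∧ a ≠ b ∧ ∃ t : ℝ, Overlap (traj T τ t a) (traj T τ t b)}

/-- The movement graph `G_M`: there is an edge from `vᵢ` to `vⱼ` whenever the intermediate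
(if any) or end position of `Mⱼ` overlaps the start position of `Mᵢ`, or the end position of
`Mⱼ` overlaps the intermediate position (if any) of `Mᵢ`; in addition, if the intermediate
positions of `Mᵢ` and `Mⱼ` overlap and `i < j`, there is an edge from `vᵢ` to `vⱼ`. -/
def Edge {k n : ℕ} (T : TransitionInstance k n) (i j : Fin n) : Prop :=
  ((T.mov j).Diagonal ∧ Overlap (T.mov j).I (T.mov i).S) ∨
  Overlap (T.mov j).E (T.mov i).S ∨
  ((T.mov i).Diagonal ∧ Overlap (T.mov j).E (T.mov i).I) ∨
  ((T.mov i).Diagonal ∧ (T.mov j).Diagonal ∧ Overlap (T.mov i).I (T.mov j).I ∧ i < j)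

/-!
Two unit squares overlap iff their lower-left corners are at distance less than one in both
coordinates. A unit-length axis-parallel translation can therefore only sweep across a square
which it already overlaps at one of its two ends, so a moving label meets another label only
from its start, intermediate or end position.

For two moving labels, one of which finishes before the other begins, the start and end
labelings and the missing edge of the movement graph exclude every such encounter. A stationary
label can be met only from the intermediate position of a diagonal movement. The labels
overlapping this position but neither the start nor the end position all lie in the quadrant
opposite to the two legs, so any two of them overlap each other: each moving label meets at most
one stationary label.
-/

section OrderedGroup

variable {α : Type*} [AddCommGroup α] [LinearOrder α] [IsOrderedAddMonoid α] {r u v x c d : α}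

theorem Ioo_inter_Ioo_add_nonempty_iff [DenselyOrdered α] :
    (Ioo u (u + r) ∩ Ioo v (v + r)).Nonempty ↔ |u - v| < r := by
  rw [Ioo_inter_Ioo, nonempty_Ioo, abs_sub_lt_iff, sub_lt_iff_lt_add, sub_lt_iff_lt_add]
  grind

theorem abs_sub_lt_or_abs_sub_lt_of_mem_uIcc (huv : |u - v| < r + r) (hx : x ∈ uIcc u v)
    (hxc : |x - c| < r) : |u - c| < r ∨ |v - c| < r := by
  rw [mem_uIcc] at hx
  grind

/-- Both `c` and `d` lie on the side of `v` away from `u`. -/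
theorem abs_sub_lt_of_abs_sub_lt_of_le_abs_sub (huv : |u - v| ≤ r)
    (hvc : |v - c| < r) (hvd : |v - d| < r) (huc : r ≤ |u - c|) (hud : r ≤ |u - d|) :
    |c - d| < r := by
  grind

end OrderedGroup

section Overlap

variable {a b c d e x : ℝ × ℝ}

theorem overlap_iff : Overlap a b ↔ |a.1 - b.1| < 1 ∧ |a.2 - b.2| < 1 := by
  simp only [Overlap, unitSq, interior_prod_eq, interior_Icc, prod_inter_prod,
    prod_nonempty_iff, Ioo_inter_Ioo_add_nonempty_iff]

theorem Overlap.symm (h : Overlap a b) : Overlap b a := by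
  rwa [Overlap, inter_comm]

theorem sharesEdge_iff :
    SharesEdge a b ↔ a.1 = b.1 ∧ |a.2 - b.2| = 1 ∨ a.2 = b.2 ∧ |a.1 - b.1| = 1 := by
  simp only [SharesEdge, abs_eq zero_le_one, sub_eq_iff_eq_add]
  grind

theorem SharesEdge.overlap_or_overlap_of_mem_segment (hab : SharesEdge a b)
    (hx : x ∈ segment ℝ a b) (hxc : Overlap x c) : Overlap a c ∨ Overlap b c := by
  obtain ⟨hx₁, hx₂⟩ := Prod.segment_subset a b hx
  rw [segment_eq_uIcc] at hx₁ hx₂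
  simp only [overlap_iff] at hxc ⊢
  rcases sharesEdge_iff.1 hab with ⟨h_eq, h_abs⟩ | ⟨h_eq, h_abs⟩
  · have h_fst : x.1 = b.1 := by simpa only [h_eq, uIcc_self, mem_singleton_iff] using hx₁
    have := abs_sub_lt_or_abs_sub_lt_of_mem_uIcc (by linarith) hx₂ hxc.2
    grind
  · have h_snd : x.2 = b.2 := by simpa only [h_eq, uIcc_self, mem_singleton_iff] using hx₂
    have := abs_sub_lt_or_abs_sub_lt_of_mem_uIcc (by linarith) hx₁ hxc.1
    grind

theorem overlap_of_overlap_corner (hab : a.2 = b.2) (hab' : |a.1 - b.1| ≤ 1)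
    (heb : e.1 = b.1) (heb' : |e.2 - b.2| ≤ 1) (hbc : Overlap b c) (hbd : Overlap b d)
    (hac : ¬ Overlap a c) (had : ¬ Overlap a d) (hec : ¬ Overlap e c) (hed : ¬ Overlap e d) :
    Overlap c d := by
  have le_fst {x} (hbx : Overlap b x) (hax : ¬ Overlap a x) : 1 ≤ |a.1 - x.1| := by
    rw [overlap_iff] at hbx hax
    grind
  have le_snd {x} (hbx : Overlap b x) (hex : ¬ Overlap e x) : 1 ≤ |e.2 - x.2| := by
    rw [overlap_iff] at hbx hex
    grind
  have hc := overlap_iff.1 hbc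
  have hd := overlap_iff.1 hbd
  exact overlap_iff.2
    ⟨abs_sub_lt_of_abs_sub_lt_of_le_abs_sub hab' hc.1 hd.1 (le_fst hbc hac) (le_fst hbd had),
      abs_sub_lt_of_abs_sub_lt_of_le_abs_sub heb' hc.2 hd.2 (le_snd hbc hec) (le_snd hbd hed)⟩

end Overlap

namespace Movement

variable {m : Movement} {c d : ℝ × ℝ} {t : ℝ}

theorem sharesEdge_S_I (m : Movement) : SharesEdge m.S m.I := by
  rcases m.legs with ⟨hIE, hSE⟩ | ⟨hSI, -⟩
  · rwa [hIE]
  · exact hSI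

theorem Diagonal.sharesEdge_I_E (hm : m.Diagonal) : SharesEdge m.I m.E :=
  (m.legs.resolve_left fun h => hm h.1).2.1

theorem Diagonal.perpendicular_legs (hm : m.Diagonal) :
    (m.S.2 = m.I.2 ∧ |m.S.1 - m.I.1| = 1 ∧ m.E.1 = m.I.1 ∧ |m.E.2 - m.I.2| = 1) ∨
      (m.E.2 = m.I.2 ∧ |m.E.1 - m.I.1| = 1 ∧ m.S.1 = m.I.1 ∧ |m.S.2 - m.I.2| = 1) := by
  obtain ⟨hSI, hIE, h_fst, h_snd⟩ := m.legs.resolve_left fun h => hm h.1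
  rw [sharesEdge_iff] at hSI hIE
  grind

theorem dur_pos (m : Movement) : 0 < m.dur := by
  unfold dur
  split_ifs <;> norm_num

theorem pos_of_nonpos (ht : t ≤ 0) : m.pos t = m.S :=
  if_pos ht

theorem pos_of_dur_le (ht : m.dur ≤ t) : m.pos t = m.E := by
  rcases eq_or_ne m.I m.E with hIE | hIE
  · have ht : 1 ≤ t := by simpa only [dur, if_pos hIE] using ht
    rcases ht.eq_or_lt with rfl | ht
    · simp [pos, hIE]
    · simp [pos, hIE, (zero_lt_one.trans ht).not_ge, ht.not_ge]
  · have ht : 2 ≤ t := by simpa only [dur, if_neg hIE] using ht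
    rcases ht.eq_or_lt with rfl | ht
    · norm_num [pos]
    · simp only [pos, if_neg ht.not_ge, if_neg (one_lt_two.trans ht).not_ge,
        if_neg (zero_lt_two.trans ht).not_ge]

theorem pos_mem_segment (m : Movement) (t : ℝ) :
    m.pos t ∈ segment ℝ m.S m.I ∪ segment ℝ m.I m.E := by
  unfold pos
  split_ifs with h₀ h₁ h₂
  · exact .inl (left_mem_segment ℝ _ _)
  · exact .inl (segment_eq_image' ℝ m.S m.I ▸ ⟨t, ⟨by linarith, h₁⟩, rfl⟩)
  · exact .inr (segment_eq_image' ℝ m.I m.E ▸ ⟨t - 1, ⟨by linarith, by linarith⟩, rfl⟩)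
  · exact .inr (right_mem_segment ℝ _ _)

theorem overlap_of_overlap_pos (h : Overlap (m.pos t) c) :
    Overlap m.S c ∨ (m.Diagonal ∧ Overlap m.I c) ∨ Overlap m.E c := by
  by_cases hm : m.Diagonal
  · rcases m.pos_mem_segment t with ht | ht
    · have := m.sharesEdge_S_I.overlap_or_overlap_of_mem_segment ht h
      tauto
    · have := hm.sharesEdge_I_E.overlap_or_overlap_of_mem_segment ht h
      tauto
  · have hIE : m.I = m.E := not_not.1 hm
    rcases m.pos_mem_segment t with ht | ht
    · have := m.sharesEdge_S_I.overlap_or_overlap_of_mem_segment ht h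
      rw [hIE] at this
      tauto
    · rw [hIE, segment_same, mem_singleton_iff] at ht
      exact .inr (.inr (ht ▸ h))

theorem Diagonal.overlap_of_overlap_I (hm : m.Diagonal)
    (hIc : Overlap m.I c) (hId : Overlap m.I d) (hSc : ¬ Overlap m.S c) (hSd : ¬ Overlap m.S d)
    (hEc : ¬ Overlap m.E c) (hEd : ¬ Overlap m.E d) : Overlap c d := by
  rcases hm.perpendicular_legs with ⟨hS, hS', hE, hE'⟩ | ⟨hE, hE', hS, hS'⟩
  · exact overlap_of_overlap_corner hS hS'.le hE hE'.le hIc hId hSc hSd hEc hEd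
  · exact overlap_of_overlap_corner hE hE'.le hS hS'.le hIc hId hEc hEd hSc hSd

end Movement

namespace TransitionInstance

variable {k n : ℕ} {T : TransitionInstance k n} {τ : Fin n → ℝ} {i j : Fin n} {s s' : Fin k}
  {t : ℝ}

theorem not_overlap_pos_S (hij : i ≠ j) (h_edge : ¬ Edge T j i) :
    ¬ Overlap ((T.mov i).pos t) (T.mov j).S := by
  intro h
  have h_start := T.free_start (.inr i) (.inr j) (Sum.inr_injective.ne hij)
  rcases Movement.overlap_of_overlap_pos h with hS | ⟨hi, hI⟩ | hE
  · exact h_start hS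
  · exact h_edge (.inl ⟨hi, hI⟩)
  · exact h_edge (.inr (.inl hE))

theorem not_overlap_pos_E (hij : i ≠ j) (h_edge : ¬ Edge T j i) :
    ¬ Overlap ((T.mov j).pos t) (T.mov i).E := by
  intro h
  have h_end := T.free_end (.inr j) (.inr i) (Sum.inr_injective.ne hij.symm)
  rcases Movement.overlap_of_overlap_pos h with hS | ⟨hj, hI⟩ | hE
  · exact h_edge (.inr (.inl hS.symm))
  · exact h_edge (.inr (.inr (.inl ⟨hj, hI.symm⟩)))
  · exact h_end hE

theorem not_overlap_pos_pos (hij : i ≠ j) (h_edge : ¬ Edge T j i)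
    (h_before : τ i + (T.mov i).dur ≤ τ j) :
    ¬ Overlap ((T.mov i).pos (t - τ i)) ((T.mov j).pos (t - τ j)) := by
  rcases le_total t (τ j) with ht | ht
  · rw [Movement.pos_of_nonpos (m := T.mov j) (by linarith)]
    exact not_overlap_pos_S hij h_edge
  · rw [Movement.pos_of_dur_le (m := T.mov i) (by linarith)]
    exact fun h => not_overlap_pos_E hij h_edge h.symm

/-- The stationary label `s` obstructs the movement of label `i`: this movement is diagonal, and
`s` overlaps its intermediate position. These are the only encounters that can occur when the
movements are executed in a topological order. -/
def Obstructs (T : TransitionInstance k n) (s : Fin k) (i : Fin n) : Prop :=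
  (T.mov i).Diagonal ∧ Overlap (T.mov i).I (T.stat s)

theorem obstructs_of_overlap_pos (h : Overlap ((T.mov i).pos t) (T.stat s)) :
    T.Obstructs s i := by
  rcases Movement.overlap_of_overlap_pos h with hS | hI | hE
  · exact absurd hS (T.free_start (.inr i) (.inl s) Sum.inr_ne_inl)
  · exact hI
  · exact absurd hE (T.free_end (.inr i) (.inl s) Sum.inr_ne_inl)

theorem Obstructs.unique (h : T.Obstructs s i) (h' : T.Obstructs s' i) : s = s' := by
  by_contra hne
  exact T.free_start (.inl s) (.inl s') (Sum.inl_injective.ne hne) <|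
    h.1.overlap_of_overlap_I h.2 h'.2
      (T.free_start (.inr i) (.inl s) Sum.inr_ne_inl)
      (T.free_start (.inr i) (.inl s') Sum.inr_ne_inl)
      (T.free_end (.inr i) (.inl s) Sum.inr_ne_inl)
      (T.free_end (.inr i) (.inl s') Sum.inr_ne_inl)

theorem exists_obstructs_of_overlap_traj (hcons : Consecutive T τ)
    (htopo : ∀ i j : Fin n, Edge T i j → τ i + (T.mov i).dur ≤ τ j) {a b : Fin k ⊕ Fin n}
    (hab : a ≠ b) (h : Overlap (traj T τ t a) (traj T τ t b)) :
    ∃ i s, T.Obstructs s i ∧ s(a, b) = s(.inl s, .inr i) := by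
  have not_edge {i j} (hij : τ i + (T.mov i).dur ≤ τ j) : ¬ Edge T j i := fun h_edge => by
    linarith [htopo j i h_edge, (T.mov i).dur_pos, (T.mov j).dur_pos]
  rcases a with s | i <;> rcases b with s' | j
  · exact absurd h (T.free_start (.inl s) (.inl s') hab)
  · exact ⟨j, s, obstructs_of_overlap_pos h.symm, rfl⟩
  · exact ⟨i, s', obstructs_of_overlap_pos h, Sym2.eq_swap⟩
  · have hij : i ≠ j := Sum.inr_injective.ne_iff.1 hab
    rcases hcons i j hij with h_before | h_before
    · exact absurd h (not_overlap_pos_pos hij (not_edge h_before) h_before)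
    · exact absurd h.symm (not_overlap_pos_pos hij.symm (not_edge h_before) h_before)

end TransitionInstance

/-- If the movement graph of a consecutive transition instance with `n` moving labels is
acyclic, then executing the movements consecutively in any topological order of the movement
graph (for every edge from `vᵢ` to `vⱼ`, movement `Mᵢ` is executed before `Mⱼ`) produces at
most `n` overlaps during the transition. -/
theorem consecutive_overlaps_le_of_acyclic {k n : ℕ} (T : TransitionInstance k n)
    (hacyclic : ∀ i : Fin n, ¬ Relation.TransGen (Edge T) i i)
    (τ : Fin n → ℝ) (hcons : Consecutive T τ)
    (htopo : ∀ i j : Fin n, Edge T i j → τ i + (T.mov i).dur ≤ τ j) :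
    overlapCount T τ ≤ n := by
  rw [overlapCount, ncard_eq_toFinset_card _ (toFinite _)]
  refine (Finset.card_le_card_of_forall_subsingleton (t := Finset.univ)
    (fun q i => ∃ s, T.Obstructs s i ∧ q = s(.inl s, .inr i)) ?_ ?_).trans_eq (Finset.card_fin n)
  · intro q hq
    obtain ⟨a, b, rfl, hab, t, h⟩ := (Finite.mem_toFinset _).1 hq
    obtain ⟨i, hi⟩ := TransitionInstance.exists_obstructs_of_overlap_traj hcons htopo hab h
    exact ⟨i, Finset.mem_univ i, hi⟩
  · rintro i - q ⟨-, s, hs, rfl⟩ q' ⟨-, s', hs', rfl⟩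
    rw [hs.unique hs']
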